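/- arXiv:1310.0422 — 2 statements merged into one kernel-verified Lean document; each statement's English description precedes it below -/
import Mathlib

section
/- Let λ > 0 and m ≥ 3 an integer. Suppose v : ℝ → (0,∞) is four times continuously differentiable, satisfies -v''''(ξ) = λ(1/v(ξ)² - 1/v(ξ)^m) for all ξ ∈ ℝ, and v(ξ) → 1, v'(ξ) → 0, v''(ξ) → 0, v'''(ξ) → 0 as ξ → -∞. Then for all ξ ∈ ℝ: -v'''(ξ) v'(ξ) + (1/2) v''(ξ)² + λ/v(ξ) - λ/((m-1) v(ξ)^{m-1}) = λ(m-2)/(m-1). -/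
open Filter

/-!
The equation `v'''' = ∇W(v)` conserves `-⟪v''', v'⟫ + ‖v''‖² / 2 + W(v)`, and along a trajectory
approaching an equilibrium `(a, 0, 0, 0)` this quantity tends to `W a`, so it equals `W a`
everywhere. The transition-layer equation is of this form for the potential
`W x = λ / x - λ / ((m - 1) x ^ (m - 1))`, and its equilibrium is `a = 1`.
-/

section FirstIntegral

open scoped RealInnerProductSpace Topology

theorem eq_of_hasDerivAt_zero_of_tendsto {F : Type*} [NormedAddCommGroup F] [NormedSpace ℝ F]
    {f : ℝ → F} {c : F} {l : Filter ℝ} [l.NeBot] (hf : ∀ t, HasDerivAt f 0 t)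
    (hlim : Tendsto f l (𝓝 c)) (t : ℝ) : f t = c := by
  have hconst (s : ℝ) : f s = f t :=
    is_const_of_deriv_eq_zero (fun r => (hf r).differentiableAt) (fun r => (hf r).deriv) s t
  exact tendsto_nhds_unique (tendsto_const_nhds.congr fun s => (hconst s).symm) hlim

variable {E : Type*} [NormedAddCommGroup E] [InnerProductSpace ℝ E]

/-- The energy of the fourth-order equation `v'''' = ∇W(v)` at the point
`(v, v', v'', v''') = (x₀, x₁, x₂, x₃)` of its phase space. -/
noncomputable def fourthOrderEnergy (W : E → ℝ) (x₀ x₁ x₂ x₃ : E) : ℝ :=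
  -⟪x₃, x₁⟫ + (1 / 2) * ‖x₂‖ ^ 2 + W x₀

theorem hasDerivAt_fourthOrderEnergy [CompleteSpace E] {W : E → ℝ} {g : E}
    {v v' v'' v''' : ℝ → E} {t : ℝ} (hW : HasGradientAt W g (v t))
    (hv : HasDerivAt v (v' t) t) (hv' : HasDerivAt v' (v'' t) t)
    (hv'' : HasDerivAt v'' (v''' t) t) (hv''' : HasDerivAt v''' g t) :
    HasDerivAt (fun s => fourthOrderEnergy W (v s) (v' s) (v'' s) (v''' s)) 0 t := by
  have hpotential : HasDerivAt (fun s => W (v s)) ⟪g, v' t⟫ t :=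
    (hW.hasFDerivAt.comp_hasDerivAt t hv).congr_deriv (by simp)
  refine (((hv'''.inner ℝ hv').neg.add (hv''.norm_sq.const_mul (1 / 2))).add
    hpotential).congr_deriv ?_
  rw [real_inner_comm (v''' t) (v'' t)]
  ring

theorem tendsto_fourthOrderEnergy {ι : Type*} {l : Filter ι} {W : E → ℝ} {a : E}
    {x₀ x₁ x₂ x₃ : ι → E} (hW : ContinuousAt W a) (h₀ : Tendsto x₀ l (𝓝 a))
    (h₁ : Tendsto x₁ l (𝓝 0)) (h₂ : Tendsto x₂ l (𝓝 0)) (h₃ : Tendsto x₃ l (𝓝 0)) :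
    Tendsto (fun i => fourthOrderEnergy W (x₀ i) (x₁ i) (x₂ i) (x₃ i)) l (𝓝 (W a)) := by
  have hlim := ((h₃.inner h₁).neg.add ((h₂.norm.pow 2).const_mul (1 / 2))).add
    (hW.tendsto.comp h₀)
  simpa [fourthOrderEnergy] using hlim

theorem stmt_8_general [CompleteSpace E] {W : E → ℝ} {g : E → E} {a : E} {l : Filter ℝ} [l.NeBot]
    {v v' v'' v''' : ℝ → E} (hWv : ∀ t, HasGradientAt W (g (v t)) (v t)) (hWa : ContinuousAt W a)
    (hv : ∀ t, HasDerivAt v (v' t) t) (hv' : ∀ t, HasDerivAt v' (v'' t) t)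
    (hv'' : ∀ t, HasDerivAt v'' (v''' t) t) (hv''' : ∀ t, HasDerivAt v''' (g (v t)) t)
    (hlim : Tendsto v l (𝓝 a)) (hlim' : Tendsto v' l (𝓝 0))
    (hlim'' : Tendsto v'' l (𝓝 0)) (hlim''' : Tendsto v''' l (𝓝 0)) (t : ℝ) :
    fourthOrderEnergy W (v t) (v' t) (v'' t) (v''' t) = W a :=
  eq_of_hasDerivAt_zero_of_tendsto
    (fun s => hasDerivAt_fourthOrderEnergy (hWv s) (hv s) (hv' s) (hv'' s) (hv''' s))
    (tendsto_fourthOrderEnergy hWa hlim hlim' hlim'' hlim''') t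

end FirstIntegral

/-- The potential `W` for which the transition-layer equation `-v'''' = λ (1 / v ^ 2 - 1 / v ^ m)`
reads `v'''' = W'(v)`. -/
noncomputable def memsPotential (lam : ℝ) (m : ℕ) (x : ℝ) : ℝ :=
  lam / x - lam / (((m : ℝ) - 1) * x ^ (m - 1))

theorem memsPotential_one (lam : ℝ) {m : ℕ} (hm : m ≠ 1) :
    memsPotential lam m 1 = lam * ((m : ℝ) - 2) / ((m : ℝ) - 1) := by
  have hm' : (m : ℝ) - 1 ≠ 0 := sub_ne_zero.mpr (by exact_mod_cast hm)
  simp only [memsPotential, one_pow]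
  field_simp
  ring

theorem hasDerivAt_memsPotential (lam : ℝ) {m : ℕ} (hm : 2 ≤ m) {x : ℝ} (hx : x ≠ 0) :
    HasDerivAt (memsPotential lam m) (-(lam * (1 / x ^ 2 - 1 / x ^ m))) x := by
  obtain ⟨n, rfl⟩ := Nat.exists_eq_add_of_le' hm
  have hn : ((n + 2 : ℕ) : ℝ) - 1 = n + 1 := by push_cast; ring
  have hn₀ : (n : ℝ) + 1 ≠ 0 := n.cast_add_one_ne_zero
  have hinv : HasDerivAt (fun y => lam / y) (-lam / x ^ 2) x :=
    ((hasDerivAt_const x lam).div (hasDerivAt_id x) hx).congr_deriv (by simp)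
  have hpow : HasDerivAt (fun y => lam / (((n + 2 : ℕ) - 1 : ℝ) * y ^ (n + 1)))
      (-lam / x ^ (n + 2)) x := by
    rw [hn]
    refine ((hasDerivAt_const x lam).div ((hasDerivAt_pow (n + 1) x).const_mul _)
      (mul_ne_zero hn₀ (pow_ne_zero _ hx))).congr_deriv ?_
    push_cast [Nat.add_sub_cancel]
    field_simp
    ring
  exact (hinv.sub hpow).congr_deriv (by ring)

/-- First integral of the fourth-order inner (transition-layer) equation
`-v'''' = λ(1/v² - 1/v^m)` for the regularized bi-Laplacian MEMS model: a positive
`C⁴` solution with `v → 1`, `v' → 0`, `v'' → 0`, `v''' → 0` as `ξ → -∞` satisfies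
`-v''' v' + (1/2) v''² + λ/v - λ/((m-1) v^(m-1)) = λ(m-2)/(m-1)` everywhere. -/
theorem stmt_8 (lam : ℝ) (m : ℕ) (hlam : 0 < lam) (hm : 3 ≤ m)
    (v v' v'' v''' : ℝ → ℝ) (hpos : ∀ ξ : ℝ, 0 < v ξ)
    (hder1 : ∀ ξ : ℝ, HasDerivAt v (v' ξ) ξ)
    (hder2 : ∀ ξ : ℝ, HasDerivAt v' (v'' ξ) ξ)
    (hder3 : ∀ ξ : ℝ, HasDerivAt v'' (v''' ξ) ξ)
    (hder4 : ∀ ξ : ℝ, HasDerivAt v'''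
      (-(lam * (1 / (v ξ) ^ 2 - 1 / (v ξ) ^ m))) ξ)
    (hlim1 : Tendsto v atBot (nhds 1))
    (hlim2 : Tendsto v' atBot (nhds 0))
    (hlim3 : Tendsto v'' atBot (nhds 0))
    (hlim4 : Tendsto v''' atBot (nhds 0)) :
    ∀ ξ : ℝ,
      -(v''' ξ) * v' ξ + (1 / 2) * (v'' ξ) ^ 2 + lam / v ξ
          - lam / (((m : ℝ) - 1) * (v ξ) ^ (m - 1))
        = lam * ((m : ℝ) - 2) / ((m : ℝ) - 1) := by
  intro ξ
  have henergy := stmt_8_general (g := fun x => -(lam * (1 / x ^ 2 - 1 / x ^ m)))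
    (fun t => (hasDerivAt_memsPotential lam (by omega) (hpos t).ne').hasGradientAt')
    (hasDerivAt_memsPotential lam (by omega) one_ne_zero).continuousAt
    hder1 hder2 hder3 hder4 hlim1 hlim2 hlim3 hlim4 ξ
  rw [memsPotential_one lam (by omega)] at henergy
  simpa [fourthOrderEnergy, memsPotential, add_sub_assoc, mul_comm] using henergy
end

section
/- Let m ≥ 4 be an integer and η ≥ 0, and define H(v) = (1/(1+η)^{m-2}) · ( Σ_{k=1}^{m-2} C(m-2,k) (k/(k+1)) v^k ) / (1+v)^{m-2} for v ≥ 0, where C(m-2,k) denotes the binomial coefficient. Then: (i) lim_{v→∞} H(v) = (1/(1+η)^{m-2}) · (m-2)/(m-1); and (ii) for every L > 0 and every v ∈ [0,L], (H(L)/L) · v ≤ H(v) ≤ ((m-2)/(2(1+η)^{m-2})) · v; that is, on [0,L] the graph of H lies above the secant line through the origin and (L, H(L)) and below its tangent line at the origin. -/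
open Filter

/-!
With `x = 1 + v` and `n = m - 2`, writing `k / (k + 1) = 1 - 1 / (k + 1)` turns the quotient in `H`
into `1 - (1 + x⁻¹ + ⋯ + x⁻ⁿ) / (n + 1)`. Every power `x⁻ʲ` is convex in `x > 0`, so `H` is concave
on `v > -1`; its graph therefore lies above its chords and below its tangent line at the origin. The
limit is visible as well, since only the term `j = 0` of the average survives as `x → ∞`.
-/

theorem convexOn_finsetSum {ι 𝕜 E β : Type*} [Semiring 𝕜] [PartialOrder 𝕜] [AddCommMonoid E]
    [AddCommMonoid β] [PartialOrder β] [IsOrderedAddMonoid β] [SMul 𝕜 E] [Module 𝕜 β]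
    {s : Set E} (hs : Convex 𝕜 s) (t : Finset ι) {f : ι → E → β}
    (hf : ∀ i ∈ t, ConvexOn 𝕜 s (f i)) : ConvexOn 𝕜 s (fun x => ∑ i ∈ t, f i x) := by
  classical
  induction t using Finset.induction_on with
  | empty => simpa only [Finset.sum_empty] using convexOn_const 0 hs
  | insert i t hi ih =>
    simp only [Finset.sum_insert hi]
    exact (hf i (t.mem_insert_self i)).add (ih fun j hj => hf j (Finset.mem_insert_of_mem hj))

theorem add_slope_mul_sub_le_of_concaveOn {𝕜 : Type*} [Field 𝕜] [LinearOrder 𝕜]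
    [IsStrictOrderedRing 𝕜] {s : Set 𝕜} {f : 𝕜 → 𝕜} {a b x : 𝕜} (hf : ConcaveOn 𝕜 s f)
    (ha : a ∈ s) (hb : b ∈ s) (hx : x ∈ Set.Icc a b) :
    f a + slope f a b * (x - a) ≤ f x := by
  rcases hx.1.eq_or_lt with rfl | hax
  · simp
  have hxs : x ∈ s := hf.1.ordConnected.out ha hb hx
  have hslope : slope f a b ≤ slope f a x :=
    hf.antitoneOn_slope_gt ha ⟨hxs, hax⟩ ⟨hb, hax.trans_le hx.2⟩ hx.2
  calc f a + slope f a b * (x - a)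
      ≤ f a + slope f a x * (x - a) := by gcongr
    _ = f x := by rw [mul_comm, ← smul_eq_mul, sub_smul_slope, vsub_eq_sub, add_sub_cancel]

theorem le_add_mul_sub_of_concaveOn_of_hasDerivAt {s : Set ℝ} {f : ℝ → ℝ} {a x f' : ℝ}
    (hf : ConcaveOn ℝ s f) (ha : a ∈ s) (hx : x ∈ s) (hf' : HasDerivAt f f' a) :
    f x ≤ f a + f' * (x - a) := by
  rcases lt_trichotomy a x with hax | rfl | hxa
  · have hslope := hf.slope_le_of_hasDerivAt ha hx hax hf'
    rw [slope_def_field, div_le_iff₀ (sub_pos.2 hax)] at hslope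
    linarith
  · simp
  · have hslope := hf.le_slope_of_hasDerivAt hx ha hxa hf'
    rw [slope_def_field, le_div_iff₀ (sub_pos.2 hxa)] at hslope
    linarith

section BinomialSums

theorem geom_sum_add_one_eq_sum_choose {R : Type*} [CommRing R] (n : ℕ) (x : R) :
    ∑ j ∈ Finset.range n, (x + 1) ^ j = ∑ k ∈ Finset.range n, (n.choose (k + 1) : R) * x ^ k := by
  simpa [Polynomial.eval_finsetSum] using
    congrArg (Polynomial.eval x) (Polynomial.geom_sum_X_comp_X_add_one_eq_sum (R := R) n)

variable {K : Type*} [Field K] [CharZero K]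

theorem sum_choose_div_add_one_mul_pow (n : ℕ) (x : K) :
    ∑ k ∈ Finset.range (n + 1), (n.choose k : K) / (k + 1) * x ^ k
      = (∑ j ∈ Finset.range (n + 1), (x + 1) ^ j) / (n + 1) := by
  rw [geom_sum_add_one_eq_sum_choose, Finset.sum_div]
  refine Finset.sum_congr rfl fun k _ => ?_
  have hchoose : ((n : K) + 1) * n.choose k = (n + 1).choose (k + 1) * (k + 1) := mod_cast
    Nat.add_one_mul_choose_eq n k
  have hn : (n : K) + 1 ≠ 0 := n.cast_add_one_ne_zero
  have hk : (k : K) + 1 ≠ 0 := k.cast_add_one_ne_zero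
  field_simp
  linear_combination x ^ k * hchoose

theorem sum_Icc_choose_mul_div_add_one_mul_pow (n : ℕ) (x : K) :
    ∑ k ∈ Finset.Icc 1 n, (n.choose k : K) * (k / (k + 1)) * x ^ k
      = (x + 1) ^ n - (∑ j ∈ Finset.range (n + 1), (x + 1) ^ j) / (n + 1) := by
  calc ∑ k ∈ Finset.Icc 1 n, (n.choose k : K) * (k / (k + 1)) * x ^ k
      = ∑ k ∈ Finset.range (n + 1), (n.choose k : K) * (k / (k + 1)) * x ^ k := by
        rw [Finset.range_eq_Ico, Finset.sum_eq_sum_Ico_succ_bot n.succ_pos]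
        simp [Finset.Ico_add_one_right_eq_Icc]
    _ = ∑ k ∈ Finset.range (n + 1), (x ^ k * n.choose k - n.choose k / (k + 1) * x ^ k) := by
        refine Finset.sum_congr rfl fun k _ => ?_
        have hk : (k : K) + 1 ≠ 0 := k.cast_add_one_ne_zero
        field_simp
        ring
    _ = (x + 1) ^ n - (∑ j ∈ Finset.range (n + 1), (x + 1) ^ j) / (n + 1) := by
        simp only [Finset.sum_sub_distrib, sum_choose_div_add_one_mul_pow, add_pow, one_pow,
          mul_one]

theorem geom_sum_div_pow {F : Type*} [Semifield F] {x : F} (hx : x ≠ 0) (n : ℕ) :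
    (∑ j ∈ Finset.range (n + 1), x ^ j) / x ^ n = ∑ j ∈ Finset.range (n + 1), x⁻¹ ^ j := by
  rw [← Finset.sum_range_reflect, Finset.sum_div]
  refine Finset.sum_congr rfl fun j hj => ?_
  rw [add_tsub_cancel_right, pow_sub₀ x hx (Finset.mem_range_succ_iff.1 hj), inv_pow,
    mul_div_cancel_left₀ _ (pow_ne_zero n hx)]

end BinomialSums

/-- The function `H`, for `m = n + 2`, without its constant prefactor `1 / (1 + η) ^ (m - 2)`. -/
noncomputable def weightedBinomialRatio (n : ℕ) (v : ℝ) : ℝ :=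
  (∑ k ∈ Finset.Icc 1 n, (n.choose k : ℝ) * ((k : ℝ) / ((k : ℝ) + 1)) * v ^ k) / (1 + v) ^ n

namespace weightedBinomialRatio

variable (n : ℕ)

theorem eq_one_sub_geom_sum_inv {v : ℝ} (hv : -1 < v) :
    weightedBinomialRatio n v
      = 1 - (∑ j ∈ Finset.range (n + 1), (1 + v)⁻¹ ^ j) / (n + 1) := by
  have hv' : 1 + v ≠ 0 := by linarith
  rw [weightedBinomialRatio, sum_Icc_choose_mul_div_add_one_mul_pow, add_comm v, sub_div,
    div_self (pow_ne_zero n hv'), div_right_comm, geom_sum_div_pow hv']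

theorem apply_zero : weightedBinomialRatio n 0 = 0 := by
  have hn : (n : ℝ) + 1 ≠ 0 := n.cast_add_one_ne_zero
  simp [eq_one_sub_geom_sum_inv, hn]

theorem tendsto_atTop :
    Tendsto (weightedBinomialRatio n) atTop (nhds (n / (n + 1))) := by
  have hinv : Tendsto (fun v : ℝ => (1 + v)⁻¹) atTop (nhds 0) :=
    tendsto_inv_atTop_zero.comp (tendsto_atTop_add_const_left _ 1 tendsto_id)
  have hsum := tendsto_finsetSum (Finset.range (n + 1)) fun j _ => hinv.pow j
  have hlim : (n : ℝ) / (n + 1) = 1 - (∑ j ∈ Finset.range (n + 1), (0 : ℝ) ^ j) / (n + 1) := by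
    rw [zero_geom_sum, if_neg n.succ_ne_zero]
    field_simp
    ring
  rw [hlim]
  refine ((hsum.div_const _).const_sub 1).congr' ?_
  filter_upwards [eventually_gt_atTop (-1)] with v hv
  exact (eq_one_sub_geom_sum_inv n hv).symm

theorem concaveOn : ConcaveOn ℝ (Set.Ioi (-1)) (weightedBinomialRatio n) := by
  have hpow (j : ℕ) : ConvexOn ℝ (Set.Ioi (-1)) fun v : ℝ => (1 + v)⁻¹ ^ j := by
    simpa [Function.comp_def] using (convexOn_zpow (𝕜 := ℝ) (-j)).translate_right 1
  have hsum := convexOn_finsetSum (convex_Ioi _) (Finset.range (n + 1)) fun j _ => hpow j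
  refine ((concaveOn_const 1 (convex_Ioi _)).sub
    (hsum.smul (inv_nonneg.2 n.cast_add_one_pos.le))).congr fun v hv => ?_
  simp only [eq_one_sub_geom_sum_inv n hv, Pi.sub_apply, smul_eq_mul, inv_mul_eq_div]

theorem hasDerivAt_zero : HasDerivAt (weightedBinomialRatio n) (n / 2) 0 := by
  have hpow (j : ℕ) : HasDerivAt (fun v : ℝ => (1 + v)⁻¹ ^ j) (-j) 0 := by
    simpa using! (((hasDerivAt_id (0 : ℝ)).const_add 1).inv (by simp)).pow j
  have hsum := HasDerivAt.fun_sum (u := Finset.range (n + 1)) fun j _ => hpow j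
  have hgauss : (∑ j ∈ Finset.range (n + 1), (j : ℝ)) * 2 = (n + 1) * n := by
    rw [← Nat.cast_sum]
    exact_mod_cast Finset.sum_range_id_mul_two (n + 1)
  have hslope : (n : ℝ) / 2 = -((∑ j ∈ Finset.range (n + 1), -(j : ℝ)) / (n + 1)) := by
    rw [Finset.sum_neg_distrib]
    field_simp
    linarith
  rw [hslope]
  refine ((hsum.div_const _).const_sub 1).congr_of_eventuallyEq ?_
  filter_upwards [Ioi_mem_nhds neg_one_lt_zero] with v hv
  exact eq_one_sub_geom_sum_inv n hv

end weightedBinomialRatio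

theorem stmt_17_general (m : ℕ) (hm : 2 ≤ m) (η : ℝ) (hη : -1 < η)
    (H : ℝ → ℝ)
    (hH : ∀ v : ℝ, H v = (1 / (1 + η) ^ (m - 2))
      * ((∑ k ∈ Finset.Icc 1 (m - 2),
          (Nat.choose (m - 2) k : ℝ) * ((k : ℝ) / ((k : ℝ) + 1)) * v ^ k)
        / (1 + v) ^ (m - 2))) :
    Tendsto H atTop
      (nhds ((1 / (1 + η) ^ (m - 2)) * (((m : ℝ) - 2) / ((m : ℝ) - 1)))) ∧
    (∀ L : ℝ, 0 < L → ∀ v ∈ Set.Icc (0 : ℝ) L, (H L / L) * v ≤ H v) ∧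
    ∀ v : ℝ, -1 < v → H v ≤ (((m : ℝ) - 2) / (2 * (1 + η) ^ (m - 2))) * v := by
  obtain ⟨n, rfl⟩ := Nat.exists_eq_add_of_le' hm
  rw [add_tsub_cancel_right] at hH ⊢
  obtain rfl : H = fun v => 1 / (1 + η) ^ n * weightedBinomialRatio n v := funext hH
  have hc : 0 ≤ 1 / (1 + η) ^ n := one_div_nonneg.2 (pow_nonneg (by linarith) n)
  have hconc := (weightedBinomialRatio.concaveOn n).smul hc
  have hderiv := (weightedBinomialRatio.hasDerivAt_zero n).const_mul (1 / (1 + η) ^ n)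
  rw [one_div_mul_eq_div, div_div] at hderiv
  have h0 : (0 : ℝ) ∈ Set.Ioi (-1) := neg_one_lt_zero (R := ℝ)
  have hm₁ : ((n + 2 : ℕ) : ℝ) - 1 = n + 1 := by push_cast; ring
  have hm₂ : ((n + 2 : ℕ) : ℝ) - 2 = n := by push_cast; ring
  rw [hm₁, hm₂]
  refine ⟨(weightedBinomialRatio.tendsto_atTop n).const_mul _, fun L hL v hv => ?_, fun v hv => ?_⟩
  · simpa [slope_def_field, weightedBinomialRatio.apply_zero] using
      add_slope_mul_sub_le_of_concaveOn hconc h0 (h0.trans hL) hv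
  · simpa [weightedBinomialRatio.apply_zero] using
      le_add_mul_sub_of_concaveOn_of_hasDerivAt hconc h0 hv hderiv

/-- Asymptotics and chord/tangent bounds for
`H(v) = (1/(1+η)^(m-2))·(Σ_{k=1}^{m-2} C(m-2,k)(k/(k+1))v^k)/(1+v)^(m-2)`:
(i) `H(v) → (1/(1+η)^(m-2))·(m-2)/(m-1)` as `v → ∞`; (ii) for every `L > 0` and
`v ∈ [0,L]`, `(H(L)/L)·v ≤ H(v) ≤ ((m-2)/(2(1+η)^(m-2)))·v`. -/
theorem stmt_17 (m : ℕ) (hm : 4 ≤ m) (η : ℝ) (hη : 0 ≤ η)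
    (H : ℝ → ℝ)
    (hH : ∀ v : ℝ, H v = (1 / (1 + η) ^ (m - 2))
      * ((∑ k ∈ Finset.Icc 1 (m - 2),
          (Nat.choose (m - 2) k : ℝ) * ((k : ℝ) / ((k : ℝ) + 1)) * v ^ k)
        / (1 + v) ^ (m - 2))) :
    Tendsto H atTop
      (nhds ((1 / (1 + η) ^ (m - 2)) * (((m : ℝ) - 2) / ((m : ℝ) - 1)))) ∧
    ∀ L : ℝ, 0 < L → ∀ v ∈ Set.Icc (0 : ℝ) L,
      (H L / L) * v ≤ H v ∧
      H v ≤ (((m : ℝ) - 2) / (2 * (1 + η) ^ (m - 2))) * v := by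
  obtain ⟨hlim, hsecant, htangent⟩ := stmt_17_general m (by lia) η (by linarith) H hH
  exact ⟨hlim, fun L hL v hv => ⟨hsecant L hL v hv, htangent v (by linarith [hv.1])⟩⟩
end
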